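/- arXiv:1810.12518 — 3 statements merged into one kernel-verified Lean document; each statement's English description precedes it below -/
import Mathlib

section
/- Let (M, d) be a metric space, (Ω, F) a measurable space, ε > 0, and let H be a nonempty subset of M. Suppose Â : H → P(Ω) is an ε-differentially private randomized algorithm on H, i.e., for all D₁, D₂ ∈ H and all measurable S ⊆ Ω, P(Â(D₁) ∈ S) ≤ exp(ε·d(D₁,D₂))·P(Â(D₂) ∈ S). Then there exists a randomized algorithm A : M → P(Ω) defined on all of M such that A is 2ε-differentially private (for all D₁, D₂ ∈ M and all measurable S, P(A(D₁) ∈ S) ≤ exp(2ε·d(D₁,D₂))·P(A(D₂) ∈ S)), and for every D ∈ H, A(D) and Â(D) are equal as probability measures. -/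
open MeasureTheory ENNReal

/-!
This is McShane's extension formula for Lipschitz functions, in multiplicative form: the least
measure satisfying all the constraints that the values of `A` on `H` impose at a point `D` is the
supremum `⨆ D' ∈ H, exp (-ε * d(D, D')) • A D'`, taken in the complete lattice of measures. It
depends on `D` in an `ε`-private way and agrees with `A` on `H`, but its total mass need not be `1`.
Dividing by the total mass, that is, conditioning on `univ`, repairs this, and since the mass itself
varies by a factor of at most `exp (ε * d)`, it costs a second `ε`.
-/

open ProbabilityTheory Set

theorem ofReal_exp_add (s t : ℝ) :
    ENNReal.ofReal (Real.exp (s + t)) =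
      ENNReal.ofReal (Real.exp s) * ENNReal.ofReal (Real.exp t) := by
  rw [Real.exp_add, ENNReal.ofReal_mul (Real.exp_pos s).le]

theorem cond_le_smul_cond {Ω : Type*} [MeasurableSpace Ω] {μ ν : Measure Ω} {a b : ℝ≥0∞}
    (hμν : μ ≤ a • ν) (hνμ : ν ≤ b • μ) (hb₀ : b ≠ 0) (hb : b ≠ ∞) (s : Set Ω) :
    μ[|s] ≤ (a * b) • ν[|s] := by
  have inv_le : (μ s)⁻¹ ≤ b * (ν s)⁻¹ := calc
    (μ s)⁻¹ = b * (b * μ s)⁻¹ := by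
      rw [ENNReal.mul_inv (.inl hb₀) (.inl hb), ← mul_assoc, ENNReal.mul_inv_cancel hb₀ hb,
        one_mul]
    _ ≤ b * (ν s)⁻¹ := by gcongr; exact hνμ s
  have restrict_le : μ.restrict s ≤ a • ν.restrict s := by
    simpa only [Measure.restrict_smul] using Measure.restrict_mono subset_rfl hμν
  calc μ[|s] = (μ s)⁻¹ • μ.restrict s := rfl
    _ ≤ (b * (ν s)⁻¹) • a • ν.restrict s := by gcongr
    _ = (a * b) • ν[|s] := by simp only [ProbabilityTheory.cond, smul_smul]; ring_nf

section PrivateExtension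

variable {M Ω : Type*} [PseudoMetricSpace M] [MeasurableSpace Ω]
  {ε : ℝ} {H : Set M} {A : M → Measure Ω} {D D₀ : M} {s : Set Ω}

/-- The algorithm `A`, whose output distribution on input `D` is `A D`, is `ε`-differentially
private on the set of inputs `H`. The inequality for all events is expressed by the order on
measures, and the values `A D` are not required to be probability measures. -/
def IsDifferentiallyPrivateOn (ε : ℝ) (A : M → Measure Ω) (H : Set M) : Prop :=
  ∀ D₁ ∈ H, ∀ D₂ ∈ H, A D₁ ≤ ENNReal.ofReal (Real.exp (ε * dist D₁ D₂)) • A D₂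

theorem isDifferentiallyPrivateOn_iff :
    IsDifferentiallyPrivateOn ε A H ↔
      ∀ D₁ ∈ H, ∀ D₂ ∈ H, ∀ S : Set Ω, MeasurableSet S →
        A D₁ S ≤ ENNReal.ofReal (Real.exp (ε * dist D₁ D₂)) * A D₂ S := by
  simp only [IsDifferentiallyPrivateOn, Measure.le_iff, Measure.smul_apply, smul_eq_mul]

theorem IsDifferentiallyPrivateOn.cond (hA : IsDifferentiallyPrivateOn ε A H) (s : Set Ω) :
    IsDifferentiallyPrivateOn (2 * ε) (fun D ↦ (A D)[|s]) H := by
  intro D₁ h₁ D₂ h₂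
  have hA' := hA D₂ h₂ D₁ h₁
  rw [dist_comm] at hA'
  rw [mul_assoc, two_mul, ofReal_exp_add]
  exact cond_le_smul_cond (hA D₁ h₁ D₂ h₂) hA'
    (ENNReal.ofReal_pos.2 (Real.exp_pos _)).ne' ENNReal.ofReal_ne_top s

/-- The McShane-type extension of `A` from `H` to all inputs: the least measure `μ` at `D` with
`A D' ≤ exp (ε * dist D D') • μ` for all `D' ∈ H`. It is in general not a probability measure. -/
noncomputable def privateEnvelope (ε : ℝ) (A : M → Measure Ω) (H : Set M) (D : M) : Measure Ω :=
  ⨆ D' : H, ENNReal.ofReal (Real.exp (-(ε * dist D D'))) • A D'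

theorem smul_le_privateEnvelope (hD₀ : D₀ ∈ H) :
    ENNReal.ofReal (Real.exp (-(ε * dist D D₀))) • A D₀ ≤ privateEnvelope ε A H D :=
  le_iSup (fun D' : H ↦ ENNReal.ofReal (Real.exp (-(ε * dist D D'))) • A D') ⟨D₀, hD₀⟩

theorem privateEnvelope_le_smul (hε : 0 ≤ ε) (hA : IsDifferentiallyPrivateOn ε A H)
    (hD₀ : D₀ ∈ H) :
    privateEnvelope ε A H D ≤ ENNReal.ofReal (Real.exp (ε * dist D D₀)) • A D₀ := by
  refine iSup_le fun ⟨D', hD'⟩ ↦ ?_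
  have triangle : -(ε * dist D D') + ε * dist D' D₀ ≤ ε * dist D D₀ := by
    linarith [mul_le_mul_of_nonneg_left (dist_triangle_left D' D₀ D) hε]
  calc ENNReal.ofReal (Real.exp (-(ε * dist D D'))) • A D'
      ≤ ENNReal.ofReal (Real.exp (-(ε * dist D D'))) •
          ENNReal.ofReal (Real.exp (ε * dist D' D₀)) • A D₀ := by
        gcongr
        exact hA D' hD' D₀ hD₀
    _ = ENNReal.ofReal (Real.exp (-(ε * dist D D') + ε * dist D' D₀)) • A D₀ := by
        rw [smul_smul, ofReal_exp_add]
    _ ≤ ENNReal.ofReal (Real.exp (ε * dist D D₀)) • A D₀ := by gcongr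

theorem isDifferentiallyPrivateOn_privateEnvelope (hε : 0 ≤ ε) (A : M → Measure Ω) (H : Set M) :
    IsDifferentiallyPrivateOn ε (privateEnvelope ε A H) univ := by
  refine fun D₁ _ D₂ _ ↦ iSup_le fun ⟨D', hD'⟩ ↦ ?_
  have triangle : -(ε * dist D₁ D') ≤ ε * dist D₁ D₂ + -(ε * dist D₂ D') := by
    linarith [mul_le_mul_of_nonneg_left (dist_triangle_left D₂ D' D₁) hε]
  calc ENNReal.ofReal (Real.exp (-(ε * dist D₁ D'))) • A D'
      ≤ ENNReal.ofReal (Real.exp (ε * dist D₁ D₂ + -(ε * dist D₂ D'))) • A D' := by gcongr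
    _ = ENNReal.ofReal (Real.exp (ε * dist D₁ D₂)) •
          ENNReal.ofReal (Real.exp (-(ε * dist D₂ D'))) • A D' := by
        rw [smul_smul, ofReal_exp_add]
    _ ≤ ENNReal.ofReal (Real.exp (ε * dist D₁ D₂)) • privateEnvelope ε A H D₂ := by
        gcongr
        exact smul_le_privateEnvelope hD'

theorem privateEnvelope_eq (hε : 0 ≤ ε) (hA : IsDifferentiallyPrivateOn ε A H) (hD : D ∈ H) :
    privateEnvelope ε A H D = A D := by
  apply le_antisymm
  · simpa using privateEnvelope_le_smul (D := D) hε hA hD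
  · simpa using smul_le_privateEnvelope (ε := ε) (A := A) (D := D) hD

theorem privateEnvelope_apply_ne_zero (hD₀ : D₀ ∈ H) (hs : A D₀ s ≠ 0) :
    privateEnvelope ε A H D s ≠ 0 := by
  have weight_pos : 0 < ENNReal.ofReal (Real.exp (-(ε * dist D D₀))) :=
    ENNReal.ofReal_pos.2 (Real.exp_pos _)
  exact ((ENNReal.mul_pos weight_pos.ne' hs).trans_le (smul_le_privateEnvelope hD₀ s)).ne'

theorem privateEnvelope_apply_ne_top (hε : 0 ≤ ε) (hA : IsDifferentiallyPrivateOn ε A H)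
    (hD₀ : D₀ ∈ H) (hs : A D₀ s ≠ ∞) : privateEnvelope ε A H D s ≠ ∞ :=
  ne_top_of_le_ne_top (ENNReal.mul_ne_top ENNReal.ofReal_ne_top hs)
    (privateEnvelope_le_smul hε hA hD₀ s)

theorem private_algorithms_can_always_be_extended_general (hε : 0 ≤ ε) (hH : H.Nonempty)
    (hprob : ∀ D ∈ H, IsProbabilityMeasure (A D)) (hA : IsDifferentiallyPrivateOn ε A H) :
    ∃ B : M → Measure Ω,
      (∀ D, IsProbabilityMeasure (B D)) ∧ IsDifferentiallyPrivateOn (2 * ε) B univ ∧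
        EqOn B A H := by
  refine ⟨fun D ↦ (privateEnvelope ε A H D)[|univ], fun D ↦ ?_,
    (isDifferentiallyPrivateOn_privateEnvelope hε A H).cond univ, fun D hD ↦ ?_⟩
  · obtain ⟨D₀, hD₀⟩ := hH
    have := hprob D₀ hD₀
    exact cond_isProbabilityMeasure_of_finite
      (privateEnvelope_apply_ne_zero hD₀ (by simp))
      (privateEnvelope_apply_ne_top hε hA hD₀ (measure_ne_top (A D₀) univ))
  · have := hprob D hD
    simp only [privateEnvelope_eq hε hA hD, cond_univ]

end PrivateExtension

/-- **Extending private algorithms at ε-cost.** Any ε-differentially private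
randomized algorithm defined on a nonempty subset `H` of a metric space `M`
extends to a 2ε-differentially private algorithm on all of `M`, agreeing
(as probability measures) with the original algorithm on `H`. -/
theorem private_algorithms_can_always_be_extended
    {M Ω : Type*} [MetricSpace M] [MeasurableSpace Ω]
    (ε : ℝ) (hε : 0 < ε) (H : Set M) (hH : H.Nonempty)
    (Ahat : M → Measure Ω)
    (hprob : ∀ D ∈ H, IsProbabilityMeasure (Ahat D))
    (hDP : ∀ D₁ ∈ H, ∀ D₂ ∈ H, ∀ S : Set Ω, MeasurableSet S →
      Ahat D₁ S ≤ ENNReal.ofReal (Real.exp (ε * dist D₁ D₂)) * Ahat D₂ S) :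
    ∃ A : M → Measure Ω,
      (∀ D : M, IsProbabilityMeasure (A D)) ∧
      (∀ D₁ D₂ : M, ∀ S : Set Ω, MeasurableSet S →
        A D₁ S ≤ ENNReal.ofReal (Real.exp (2 * ε * dist D₁ D₂)) * A D₂ S) ∧
      (∀ D ∈ H, A D = Ahat D) := by
  simpa [isDifferentiallyPrivateOn_iff, Set.EqOn] using
    private_algorithms_can_always_be_extended_general hε.le hH hprob
      (isDifferentiallyPrivateOn_iff.2 hDP)
end

section
/- Let (M, d) be a metric space, (Ω, F) a measurable space, ε > 0, H ⊆ M nonempty, and μ a probability measure on (Ω, F). Let (f_{D'})_{D' ∈ H} be a family of nonnegative measurable functions on Ω, and for D ∈ M define Z_D = ∫_Ω inf_{D' ∈ H} [exp(ε·d(D,D'))·f_{D'}(ω)] dμ(ω). Then for all D₁, D₂ ∈ M, Z_{D₁} ≤ exp(ε·d(D₁,D₂))·Z_{D₂}. -/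
open MeasureTheory ENNReal

section ExpDist

variable {M ι : Type*} [PseudoMetricSpace M] {ε : ℝ}

theorem ofReal_exp_mul_dist_le_mul (hε : 0 ≤ ε) (x y z : M) :
    ENNReal.ofReal (Real.exp (ε * dist x z)) ≤
      ENNReal.ofReal (Real.exp (ε * dist x y)) * ENNReal.ofReal (Real.exp (ε * dist y z)) := by
  rw [← ENNReal.ofReal_mul (Real.exp_pos _).le, ← Real.exp_add, ← mul_add]
  gcongr
  exact dist_triangle x y z

theorem iInf_ofReal_exp_mul_dist_mul_le (hε : 0 ≤ ε) (p : ι → M) (g : ι → ℝ≥0∞) (x y : M) :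
    ⨅ i, ENNReal.ofReal (Real.exp (ε * dist x (p i))) * g i ≤
      ENNReal.ofReal (Real.exp (ε * dist x y)) *
        ⨅ i, ENNReal.ofReal (Real.exp (ε * dist y (p i))) * g i := by
  have exp_ne_zero : ENNReal.ofReal (Real.exp (ε * dist x y)) ≠ 0 :=
    (ENNReal.ofReal_pos.2 (Real.exp_pos _)).ne'
  rw [ENNReal.mul_iInf_of_ne exp_ne_zero ENNReal.ofReal_ne_top]
  refine iInf_mono fun i => ?_
  calc
    ENNReal.ofReal (Real.exp (ε * dist x (p i))) * g i
      ≤ ENNReal.ofReal (Real.exp (ε * dist x y)) *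
          ENNReal.ofReal (Real.exp (ε * dist y (p i))) * g i := by
        gcongr
        exact ofReal_exp_mul_dist_le_mul hε x y (p i)
    _ = ENNReal.ofReal (Real.exp (ε * dist x y)) *
          (ENNReal.ofReal (Real.exp (ε * dist y (p i))) * g i) := mul_assoc _ _ _

theorem normalizing_constant_lipschitz_general {Ω : Type*} [MeasurableSpace Ω] (hε : 0 ≤ ε)
    (μ : Measure Ω) (p : ι → M) (f : ι → Ω → ℝ≥0∞) (x y : M) :
    ∫⁻ ω, ⨅ i, ENNReal.ofReal (Real.exp (ε * dist x (p i))) * f i ω ∂μ ≤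
      ENNReal.ofReal (Real.exp (ε * dist x y)) *
        ∫⁻ ω, ⨅ i, ENNReal.ofReal (Real.exp (ε * dist y (p i))) * f i ω ∂μ := by
  -- An uncountable infimum may fail to be measurable, but a finite constant factors out of
  -- `∫⁻` (a lower integral) regardless.
  rw [← lintegral_const_mul' _ _ ENNReal.ofReal_ne_top]
  exact lintegral_mono fun ω => iInf_ofReal_exp_mul_dist_mul_le hε p (f · ω) x y

end ExpDist

/-- Lipschitz property of the normalizing constants: with
`Z_D = ∫_Ω inf_{D' ∈ H} exp(ε·d(D,D'))·f_{D'} dμ`, one has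
`Z_{D₁} ≤ exp(ε·d(D₁,D₂))·Z_{D₂}` for all `D₁, D₂ ∈ M`. -/
theorem normalizing_constant_lipschitz
    {M Ω : Type*} [MetricSpace M] [MeasurableSpace Ω]
    (ε : ℝ) (hε : 0 < ε) (H : Set M) (hH : H.Nonempty)
    (μ : Measure Ω) [IsProbabilityMeasure μ]
    (f : M → Ω → ℝ≥0∞)
    (hmeas : ∀ D' ∈ H, Measurable (f D'))
    (D₁ D₂ : M) :
    (∫⁻ ω, ⨅ D' : H, ENNReal.ofReal (Real.exp (ε * dist D₁ (D' : M))) * f (D' : M) ω ∂μ)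
      ≤ ENNReal.ofReal (Real.exp (ε * dist D₁ D₂)) *
        ∫⁻ ω, ⨅ D' : H, ENNReal.ofReal (Real.exp (ε * dist D₂ (D' : M))) * f (D' : M) ω ∂μ :=
  normalizing_constant_lipschitz_general hε.le μ (fun D' : H => (D' : M)) (fun D' : H => f D')
    D₁ D₂
end

section
/- Let (M, d) be a metric space, (Ω, F) a measurable space, ε > 0, and H ⊆ M nonempty. Let Â : H → P(Ω) be an ε-differentially private randomized algorithm, fix D₀ ∈ H, set μ = Â(D₀), and let f_{D'} = d(Â(D'))/dμ for D' ∈ H. For D ∈ M define g_D(ω) = inf_{D' ∈ H} [exp(ε·d(D,D'))·f_{D'}(ω)] and Z_D = ∫_Ω g_D dμ, and assume Z_D > 0 for all D ∈ M. Then for all D₁, D₂ ∈ M and every ω ∈ Ω, (1/Z_{D₁})·g_{D₁}(ω) ≤ exp(2ε·d(D₁,D₂))·(1/Z_{D₂})·g_{D₂}(ω); consequently, the randomized algorithm A : M → P(Ω) defined by dA(D)/dμ = g_D/Z_D is 2ε-differentially private on all of M. -/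
open MeasureTheory ENNReal

/-!
Say that `u : M → [0, ∞]` is `K`-log-Lipschitz if `u x ≤ exp (K * d(x, y)) * u y`. By the triangle
inequality `x ↦ exp (K * d(x, p))` has this property, and the property survives infima, integrals
and inversion, while constants add up under multiplication. Hence `D ↦ g_D(ω)` and `D ↦ 1 / Z_D` are
both `ε`-log-Lipschitz: the numerator and the normalisation each cost one `ε`, and integrating the
product over an event yields `2ε`-differential privacy.
-/

section LogLipschitz

variable {M Ω ι : Type*} [PseudoMetricSpace M] {K L : ℝ} {u v : M → ℝ≥0∞}

/-- The function `log u` is `K`-Lipschitz. The condition is stated multiplicatively so that `u` may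
take the values `0` and `∞`. -/
def LogLipschitzWith (K : ℝ) (u : M → ℝ≥0∞) : Prop :=
  ∀ x y, u x ≤ ENNReal.ofReal (Real.exp (K * dist x y)) * u y

theorem ofReal_exp_mul_ofReal_exp (a b : ℝ) :
    ENNReal.ofReal (Real.exp a) * ENNReal.ofReal (Real.exp b) =
      ENNReal.ofReal (Real.exp (a + b)) := by
  rw [← ENNReal.ofReal_mul (Real.exp_nonneg a), Real.exp_add]

theorem ofReal_exp_ne_zero (a : ℝ) : ENNReal.ofReal (Real.exp a) ≠ 0 :=
  (ENNReal.ofReal_pos.mpr (Real.exp_pos a)).ne'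

theorem logLipschitzWith_exp_mul_dist (hK : 0 ≤ K) (p : M) :
    LogLipschitzWith K fun x ↦ ENNReal.ofReal (Real.exp (K * dist x p)) := fun x y ↦ by
  rw [ofReal_exp_mul_ofReal_exp, ← mul_add]
  beta_reduce
  gcongr
  exact dist_triangle x y p

namespace LogLipschitzWith

theorem mul (hu : LogLipschitzWith K u) (hv : LogLipschitzWith L v) :
    LogLipschitzWith (K + L) fun x ↦ u x * v x := fun x y ↦ by
  rw [add_mul, ← ofReal_exp_mul_ofReal_exp, mul_mul_mul_comm]
  exact mul_le_mul' (hu x y) (hv x y)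

theorem mul_const (hu : LogLipschitzWith K u) (c : ℝ≥0∞) :
    LogLipschitzWith K fun x ↦ u x * c := fun x y ↦ by
  rw [← mul_assoc]
  beta_reduce
  gcongr
  exact hu x y

theorem inv (hu : LogLipschitzWith K u) : LogLipschitzWith K fun x ↦ (u x)⁻¹ := fun x y ↦ by
  rw [← ENNReal.div_le_iff' (ofReal_exp_ne_zero _) ofReal_ne_top, div_eq_mul_inv,
    ← ENNReal.mul_inv (.inr ofReal_ne_top) (.inr (ofReal_exp_ne_zero _)), mul_comm, dist_comm]
  exact ENNReal.inv_le_inv.mpr (hu y x)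

theorem iInf {u : ι → M → ℝ≥0∞} (hu : ∀ i, LogLipschitzWith K (u i)) :
    LogLipschitzWith K fun x ↦ ⨅ i, u i x := fun x y ↦ by
  rw [ENNReal.mul_iInf_of_ne (ofReal_exp_ne_zero _) ofReal_ne_top]
  exact iInf_mono fun i ↦ hu i x y

theorem lintegral [MeasurableSpace Ω] {h : M → Ω → ℝ≥0∞}
    (hh : ∀ ω, LogLipschitzWith K fun x ↦ h x ω) (μ : Measure Ω) :
    LogLipschitzWith K fun x ↦ ∫⁻ ω, h x ω ∂μ := fun x y ↦ by
  rw [← lintegral_const_mul' _ _ ofReal_ne_top]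
  exact lintegral_mono fun ω ↦ hh ω x y

theorem inv_lintegral_mul [MeasurableSpace Ω] {h : M → Ω → ℝ≥0∞}
    (hh : ∀ ω, LogLipschitzWith K fun x ↦ h x ω) (μ : Measure Ω) (ω : Ω) :
    LogLipschitzWith (2 * K) fun x ↦ (∫⁻ ω', h x ω' ∂μ)⁻¹ * h x ω := by
  rw [two_mul]
  exact (lintegral hh μ).inv.mul (hh ω)

end LogLipschitzWith

/-- The Pasch–Hausdorff (McShane) envelope, written multiplicatively: for `0 ≤ K`, the largest
`K`-log-Lipschitz function that is at most `a i` at each point `p i`. The density `g_D(ω)` is its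
value at `D` for `a i = f_i(ω)`. -/
noncomputable def expInfEnvelope (K : ℝ) (p : ι → M) (a : ι → ℝ≥0∞) (x : M) : ℝ≥0∞ :=
  ⨅ i, ENNReal.ofReal (Real.exp (K * dist x (p i))) * a i

theorem logLipschitzWith_expInfEnvelope (hK : 0 ≤ K) (p : ι → M) (a : ι → ℝ≥0∞) :
    LogLipschitzWith K (expInfEnvelope K p a) :=
  .iInf fun i ↦ (logLipschitzWith_exp_mul_dist hK (p i)).mul_const (a i)

theorem lintegral_expInfEnvelope_ne_top [MeasurableSpace Ω] {μ : Measure Ω} (K : ℝ) (p : ι → M)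
    {f : ι → Ω → ℝ≥0∞} {i : ι} (hi : ∫⁻ ω, f i ω ∂μ ≠ ∞) (x : M) :
    ∫⁻ ω, expInfEnvelope K p (f · ω) x ∂μ ≠ ∞ := by
  have h_le : ∫⁻ ω, expInfEnvelope K p (f · ω) x ∂μ ≤
      ENNReal.ofReal (Real.exp (K * dist x (p i))) * ∫⁻ ω, f i ω ∂μ := by
    rw [← lintegral_const_mul' _ _ ofReal_ne_top]
    exact lintegral_mono fun ω ↦ iInf_le _ i
  exact ne_top_of_le_ne_top (mul_ne_top ofReal_ne_top hi) h_le

end LogLipschitz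

section DifferentialPrivacy

variable {M Ω ι : Type*} [PseudoMetricSpace M] [MeasurableSpace Ω] {ε : ℝ} {μ : Measure Ω}

/-- `ε`-differential privacy of a randomized algorithm, encoded as the family of its output laws
indexed by the inputs. That these are probability measures is not part of the definition. -/
def IsDifferentiallyPrivate (ε : ℝ) (A : M → Measure Ω) : Prop :=
  ∀ S, MeasurableSet S → LogLipschitzWith ε fun D ↦ A D S

theorem isDifferentiallyPrivate_withDensity {h : M → Ω → ℝ≥0∞}
    (hh : ∀ ω, LogLipschitzWith ε fun D ↦ h D ω) (μ : Measure Ω) :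
    IsDifferentiallyPrivate ε fun D ↦ μ.withDensity (h D) := fun S hS ↦ by
  simp only [withDensity_apply _ hS]
  exact .lintegral hh (μ.restrict S)

theorem isProbabilityMeasure_withDensity_div_lintegral {h : Ω → ℝ≥0∞}
    (h_pos : 0 < ∫⁻ ω, h ω ∂μ) (h_fin : ∫⁻ ω, h ω ∂μ ≠ ∞) :
    IsProbabilityMeasure (μ.withDensity fun ω ↦ h ω / ∫⁻ ω', h ω' ∂μ) where
  measure_univ := by
    simp only [withDensity_apply _ MeasurableSet.univ, Measure.restrict_univ, div_eq_mul_inv]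
    rw [lintegral_mul_const' _ _ (inv_ne_top.mpr h_pos.ne'),
      ENNReal.mul_inv_cancel h_pos.ne' h_fin]

theorem normalized_inf_density_is_two_eps_dp_general (hε : 0 ≤ ε) (p : ι → M) (f : ι → Ω → ℝ≥0∞)
    {g : M → Ω → ℝ≥0∞} (hg : ∀ D ω, g D ω = expInfEnvelope ε p (f · ω) D)
    {Z : M → ℝ≥0∞} (hZ : ∀ D, Z D = ∫⁻ ω, g D ω ∂μ) (hZ_pos : ∀ D, 0 < Z D) (hZ_fin : ∀ D, Z D ≠ ∞)
    {A : M → Measure Ω} (hA : ∀ D, A D = μ.withDensity fun ω ↦ g D ω / Z D) :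
    (∀ D, IsProbabilityMeasure (A D)) ∧
      (∀ ω, LogLipschitzWith (2 * ε) fun D ↦ (Z D)⁻¹ * g D ω) ∧
      IsDifferentiallyPrivate (2 * ε) A := by
  obtain rfl : g = fun D ω ↦ expInfEnvelope ε p (f · ω) D := funext₂ hg
  obtain rfl := funext hZ
  obtain rfl := funext hA
  have h_density := LogLipschitzWith.inv_lintegral_mul
    (fun ω ↦ logLipschitzWith_expInfEnvelope hε p (f · ω)) μ
  refine ⟨fun D ↦ isProbabilityMeasure_withDensity_div_lintegral (hZ_pos D) (hZ_fin D),
    h_density, ?_⟩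
  simp only [ENNReal.div_eq_inv_mul]
  exact isDifferentiallyPrivate_withDensity h_density μ

end DifferentialPrivacy

/-- With `g_D(ω) = inf_{D' ∈ H} exp(ε·d(D,D'))·f_{D'}(ω)` and
`Z_D = ∫_Ω g_D dμ` assumed positive, for all `D₁, D₂ ∈ M` and every `ω`,
`(1/Z_{D₁})·g_{D₁}(ω) ≤ exp(2ε·d(D₁,D₂))·(1/Z_{D₂})·g_{D₂}(ω)`; consequently
the algorithm `A(D) = (g_D/Z_D)·μ` is 2ε-differentially private on all of `M`. -/
theorem normalized_inf_density_is_two_eps_dp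
    {M Ω : Type*} [MetricSpace M] [MeasurableSpace Ω]
    (ε : ℝ) (hε : 0 < ε) (H : Set M) (hH : H.Nonempty)
    (Ahat : M → Measure Ω)
    (hprob : ∀ D ∈ H, IsProbabilityMeasure (Ahat D))
    (hDP : ∀ D₁ ∈ H, ∀ D₂ ∈ H, ∀ S : Set Ω, MeasurableSet S →
      Ahat D₁ S ≤ ENNReal.ofReal (Real.exp (ε * dist D₁ D₂)) * Ahat D₂ S)
    (D₀ : M) (hD₀ : D₀ ∈ H)
    (f : M → Ω → ℝ≥0∞)
    (hmeas : ∀ D' ∈ H, Measurable (f D'))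
    (hdens : ∀ D' ∈ H, ∀ S : Set Ω, MeasurableSet S →
      Ahat D' S = ∫⁻ ω in S, f D' ω ∂(Ahat D₀))
    (g : M → Ω → ℝ≥0∞)
    (hg : ∀ D ω, g D ω =
      ⨅ D' : H, ENNReal.ofReal (Real.exp (ε * dist D (D' : M))) * f (D' : M) ω)
    (Z : M → ℝ≥0∞)
    (hZ : ∀ D, Z D = ∫⁻ ω, g D ω ∂(Ahat D₀))
    (hZpos : ∀ D, 0 < Z D)
    (A : M → Measure Ω)
    (hA : ∀ D, A D = (Ahat D₀).withDensity (fun ω => g D ω / Z D)) :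
    (∀ D₁ D₂ : M, ∀ ω : Ω,
      (Z D₁)⁻¹ * g D₁ ω ≤
        ENNReal.ofReal (Real.exp (2 * ε * dist D₁ D₂)) * ((Z D₂)⁻¹ * g D₂ ω)) ∧
    (∀ D₁ D₂ : M, ∀ S : Set Ω, MeasurableSet S →
      A D₁ S ≤ ENNReal.ofReal (Real.exp (2 * ε * dist D₁ D₂)) * A D₂ S) := by
  have hf_fin : ∫⁻ ω, f D₀ ω ∂(Ahat D₀) ≠ ∞ := by
    have := hprob D₀ hD₀
    rw [← setLIntegral_univ, ← hdens D₀ hD₀ Set.univ .univ]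
    exact measure_ne_top _ _
  have hZ_fin (D : M) : Z D ≠ ∞ := by
    rw [hZ, funext (hg D)]
    exact lintegral_expInfEnvelope_ne_top ε ((↑) : H → M) (i := ⟨D₀, hD₀⟩) hf_fin D
  obtain ⟨-, h_density, h_dp⟩ := normalized_inf_density_is_two_eps_dp_general hε.le
    ((↑) : H → M) (fun D' ↦ f D') hg hZ hZpos hZ_fin hA
  exact ⟨fun D₁ D₂ ω ↦ h_density ω D₁ D₂, fun D₁ D₂ S hS ↦ h_dp S hS D₁ D₂⟩
end
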